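/- Fix an integer n ≥ 2 and a real λ with −min{(23n + 4)/(28√n), (25n − 6)/(30√n)} ≤ λ < 0. Then there exists ε̄ > 0 such that for every ε ∈ (0, ε̄] the following holds: let f_ε be the maximal solution of the profile ODE f''(r)/(1 + f'(r)²) = (r − (n−1)/r)·f'(r) − f(r) − λ·√(1 + f'(r)²) on [0, r_*^ε) with f_ε(0) = −λ + ε and f_ε'(0) = 0, where r_*^ε is the blow-up radius (lim_{r → r_*^ε} f_ε'(r) = −∞), and set x_*^ε = lim_{r → r_*^ε} f_ε(r). Then r_*^ε ≥ √(log(1/(√π·ε))) and −(30n + 4)/√(log(1/(√π·ε))) − λ ≤ x_*^ε < −λ. -/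

import Mathlib

open Real Set Filter

/-- The profile ODE (2.7): `f''/(1+f'²) = (r - (n-1)/r) f' - f - λ √(1+f'²)` at the point `r`. -/
def ProfileEq (n : ℕ) (lam : ℝ) (f : ℝ → ℝ) (r : ℝ) : Prop :=
  deriv (deriv f) r / (1 + (deriv f r) ^ 2) =
    (r - ((n : ℝ) - 1) / r) * deriv f r - f r - lam * Real.sqrt (1 + (deriv f r) ^ 2)

/-!
In terms of the angle `θ` with `f' = -tan θ`, the profile equation says that `r ^ (n - 1) * sin θ`
has derivative `r ^ (n - 1) * H`, where `H = r sin θ + f cos θ + λ`, and that `θ' cos θ` is the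
curvature `κ = H - (n - 1) sin θ / r`, which stays positive. Let `R = √(log (1 / (√π ε)))`. By
Grönwall `sin θ ≤ ε r exp (r² / 2 + |λ| r)`, so the curve is still almost horizontal at radius `R`.
Up to `R` the function `H` increases, hence so does `tan θ / r`, and `tan θ` at least doubles
between `R / 2` and `R`; from then on `H` dominates `R sin θ` up to a constant factor. So
`θ' ≥ (R / 8) tan θ = -(R / 8) f'` beyond `R`: the remaining descent of `f` is at most `8 / R` times
the remaining turning of `θ`, which is less than `π / 2`.
-/

open Topology

section Calculus

theorem sub_le_sub_of_hasDerivAt_le {F F' G G' : ℝ → ℝ} {a c : ℝ} (hac : a ≤ c)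
    (hF : ContinuousOn F (Icc a c)) (hG : ContinuousOn G (Icc a c))
    (hF' : ∀ r ∈ Ioo a c, HasDerivAt F (F' r) r) (hG' : ∀ r ∈ Ioo a c, HasDerivAt G (G' r) r)
    (hle : ∀ r ∈ Ioo a c, F' r ≤ G' r) : F c - F a ≤ G c - G a := by
  have hmono : MonotoneOn (G - F) (Icc a c) :=
    monotoneOn_of_hasDerivWithinAt_nonneg (f' := G' - F') (convex_Icc a c) (hG.sub hF)
      (fun r hr ↦ by
        rw [interior_Icc] at hr
        exact ((hG' r hr).sub (hF' r hr)).hasDerivWithinAt)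
      (fun r hr ↦ by
        rw [interior_Icc] at hr
        exact sub_nonneg.2 (hle r hr))
  have hends := hmono (left_mem_Icc.2 hac) (right_mem_Icc.2 hac) hac
  simp only [Pi.sub_apply] at hends
  linarith

theorem pos_of_hasDerivAt_pos_of_first_zero {u u' : ℝ → ℝ} {a b : ℝ}
    (hu : ∀ r ∈ Ioo a b, HasDerivAt u (u' r) r) (hnear : ∀ᶠ r in 𝓝[>] a, 0 < u r)
    (hzero : ∀ t ∈ Ioo a b, (∀ r ∈ Ioo a t, 0 < u r) → u t = 0 → 0 < u' t) :
    ∀ r ∈ Ioo a b, 0 < u r := by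
  by_contra! hbad
  obtain ⟨c, hc, huc⟩ := hbad
  obtain ⟨s, hs, hus⟩ := mem_nhdsGT_iff_exists_Ioo_subset.1 hnear
  have hsc : s ≤ c := not_lt.1 fun h ↦ (hus ⟨hc.1, h⟩).not_ge huc
  have hcont : ContinuousOn u (Icc s c) :=
    HasDerivAt.continuousOn fun r hr ↦ hu r ⟨hs.trans_le hr.1, hr.2.trans_lt hc.2⟩
  have hcompact : IsCompact (Icc s c ∩ u ⁻¹' Iic 0) :=
    isCompact_Icc.of_isClosed_subset
      (hcont.preimage_isClosed_of_isClosed isClosed_Icc isClosed_Iic) inter_subset_left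
  obtain ⟨t, ⟨ht, hut⟩, hleast⟩ := hcompact.exists_isLeast ⟨c, ⟨hsc, le_rfl⟩, huc⟩
  have hat : a < t := hs.trans_le ht.1
  have htab : t ∈ Ioo a b := ⟨hat, ht.2.trans_lt hc.2⟩
  have hbefore : ∀ r ∈ Ioo a t, 0 < u r := by
    intro r hr
    rcases lt_or_ge r s with hrs | hsr
    · exact hus ⟨hr.1, hrs⟩
    · exact not_le.1 fun hneg ↦ hr.2.not_ge (hleast ⟨⟨hsr, hr.2.le.trans ht.2⟩, hneg⟩)
  have hut0 : u t = 0 := by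
    refine le_antisymm hut (ge_of_tendsto
      ((hu t htab).continuousAt.tendsto.mono_left (nhdsWithin_le_nhds (s := Iio t))) ?_)
    filter_upwards [Ioo_mem_nhdsLT hat] with r hr using (hbefore r hr).le
  have hsign := eventually_nhdsWithin_sign_eq_of_deriv_pos
    ((hu t htab).deriv.symm ▸ hzero t htab hbefore hut0) hut0
  obtain ⟨r, hr, hrt⟩ :=
    ((hsign.filter_mono nhdsWithin_le_nhds).and (Ioo_mem_nhdsLT hat)).exists
  rw [sign_neg (sub_neg.2 hrt.2), sign_pos (hbefore r hrt)] at hr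
  exact absurd hr (by decide)

theorem tendsto_nhdsGT_of_continuousOn_Ico {F : ℝ → ℝ} {a b : ℝ} (hab : a < b)
    (hF : ContinuousOn F (Ico a b)) : Tendsto F (𝓝[>] a) (𝓝 (F a)) :=
  (hF a (left_mem_Ico.2 hab)).mono_left <| nhdsWithin_le_of_mem <|
    mem_of_superset (Ioo_mem_nhdsGT hab) Ioo_subset_Ico_self

end Calculus

theorem one_sub_cos_le_sin {x : ℝ} (hsin : 0 ≤ sin x) (hcos : 0 ≤ cos x) :
    1 - cos x ≤ sin x := by
  nlinarith [sin_sq_add_cos_sq x, sin_le_one x, cos_le_one x]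

/-- The λ-mean curvature `⟨X, ν⟩ + λ` of the hypersurface generated by the curve `(f r, r)`, where
`θ r` is the angle such that `f' = -tan θ`. -/
noncomputable def meanCurv (lam : ℝ) (f θ : ℝ → ℝ) (r : ℝ) : ℝ :=
  r * sin (θ r) + f r * cos (θ r) + lam

/-- The curvature of the profile curve: the mean curvature minus the `m` rotational principal
curvatures `sin θ / r`. -/
noncomputable def meridianCurv (m : ℕ) (lam : ℝ) (f θ : ℝ → ℝ) (r : ℝ) : ℝ :=
  meanCurv lam f θ r - m * sin (θ r) / r

/-- A rotationally symmetric λ-hypersurface profile `(f r, r)` on `[0, b)`, with `m = n - 1`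
rotational directions, in terms of its angle: `f' = -tan θ`, and `θ' = κ / cos θ` for the
curvature `κ` of the curve is the profile ODE. -/
structure AngleProfile (m : ℕ) (lam b : ℝ) (f θ : ℝ → ℝ) : Prop where
  multiplicity_pos : 0 < m
  radius_pos : 0 < b
  continuousOn : ContinuousOn f (Ico 0 b)
  continuousOn_angle : ContinuousOn θ (Ico 0 b)
  angle_mem : ∀ r ∈ Ico 0 b, θ r ∈ Ioo (-(π / 2)) (π / 2)
  hasDerivAt : ∀ r ∈ Ioo 0 b, HasDerivAt f (-tan (θ r)) r
  hasDerivAt_angle : ∀ r ∈ Ioo 0 b, HasDerivAt θ (meridianCurv m lam f θ r / cos (θ r)) r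

namespace AngleProfile

variable {m : ℕ} {lam b : ℝ} {f θ : ℝ → ℝ}

section Equations

theorem cos_pos (h : AngleProfile m lam b f θ) {r : ℝ} (hr : r ∈ Ico 0 b) : 0 < cos (θ r) :=
  cos_pos_of_mem_Ioo (h.angle_mem r hr)

theorem continuousOn_sin (h : AngleProfile m lam b f θ) :
    ContinuousOn (fun r ↦ sin (θ r)) (Ico 0 b) :=
  continuous_sin.comp_continuousOn h.continuousOn_angle

theorem continuousOn_meanCurv (h : AngleProfile m lam b f θ) :
    ContinuousOn (meanCurv lam f θ) (Ico 0 b) :=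
  ((continuousOn_id.mul h.continuousOn_sin).add
    (h.continuousOn.mul (continuous_cos.comp_continuousOn h.continuousOn_angle))).add_const lam

theorem hasDerivAt_sin (h : AngleProfile m lam b f θ) {r : ℝ} (hr : r ∈ Ioo 0 b) :
    HasDerivAt (fun r ↦ sin (θ r)) (meridianCurv m lam f θ r) r := by
  refine (h.hasDerivAt_angle r hr).sin.congr_deriv ?_
  field_simp [(h.cos_pos (Ioo_subset_Ico_self hr)).ne']

theorem hasDerivAt_tan (h : AngleProfile m lam b f θ) {r : ℝ} (hr : r ∈ Ioo 0 b) :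
    HasDerivAt (fun r ↦ tan (θ r)) (meridianCurv m lam f θ r / cos (θ r) ^ 3) r := by
  have hcos := (h.cos_pos (Ioo_subset_Ico_self hr)).ne'
  refine ((Real.hasDerivAt_tan hcos).comp r (h.hasDerivAt_angle r hr)).congr_deriv ?_
  field_simp

theorem hasDerivAt_meanCurv (h : AngleProfile m lam b f θ) {r : ℝ} (hr : r ∈ Ioo 0 b) :
    HasDerivAt (meanCurv lam f θ) (meridianCurv m lam f θ r * (r - f r * tan (θ r))) r := by
  have hcos := (h.cos_pos (Ioo_subset_Ico_self hr)).ne'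
  refine ((((hasDerivAt_id r).mul (h.hasDerivAt_sin hr)).add
    ((h.hasDerivAt r hr).mul (h.hasDerivAt_angle r hr).cos)).add_const lam).congr_deriv ?_
  simp only [id, tan_eq_sin_div_cos]
  field_simp
  ring

theorem hasDerivAt_meridianCurv (h : AngleProfile m lam b f θ) {r : ℝ} (hr : r ∈ Ioo 0 b) :
    HasDerivAt (meridianCurv m lam f θ)
      (meridianCurv m lam f θ r * (r - f r * tan (θ r) - m / r) + m * sin (θ r) / r ^ 2) r := by
  have hr0 : r ≠ 0 := hr.1.ne'
  refine ((h.hasDerivAt_meanCurv hr).sub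
    (((h.hasDerivAt_sin hr).const_mul (m : ℝ)).div (hasDerivAt_id r) hr0)).congr_deriv ?_
  simp only [id]
  field_simp
  ring

theorem hasDerivAt_pow_mul_sin (h : AngleProfile m lam b f θ) {r : ℝ} (hr : r ∈ Ioo 0 b) :
    HasDerivAt (fun r ↦ r ^ m * sin (θ r)) (r ^ m * meanCurv lam f θ r) r := by
  have hr0 : r ≠ 0 := hr.1.ne'
  refine ((hasDerivAt_pow m r).mul (h.hasDerivAt_sin hr)).congr_deriv ?_
  rw [← pow_sub_one_mul h.multiplicity_pos.ne' r, meridianCurv]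
  field_simp
  ring

theorem hasDerivAt_meanCurv_div_cos (h : AngleProfile m lam b f θ) {r : ℝ} (hr : r ∈ Ioo 0 b) :
    HasDerivAt (fun r ↦ meanCurv lam f θ r / cos (θ r))
      (meridianCurv m lam f θ r / cos (θ r) ^ 3 * (r + lam * sin (θ r))) r := by
  have hcos := (h.cos_pos (Ioo_subset_Ico_self hr)).ne'
  refine ((h.hasDerivAt_meanCurv hr).div (h.hasDerivAt_angle r hr).cos hcos).congr_deriv ?_
  rw [tan_eq_sin_div_cos, meanCurv]
  field_simp
  linear_combination (r * meridianCurv m lam f θ r) * sin_sq_add_cos_sq (θ r)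

end Equations

section Positivity

theorem tendsto_sin_div (h : AngleProfile m lam b f θ) :
    Tendsto (fun r ↦ sin (θ r) / r) (𝓝[>] 0) (𝓝 (meanCurv lam f θ 0 / (m + 1))) := by
  have hIoo : Ioo 0 b ∈ 𝓝[>] (0 : ℝ) := Ioo_mem_nhdsGT h.radius_pos
  have hpow {k : ℕ} (hk : k ≠ 0) : Tendsto (fun r : ℝ ↦ r ^ k) (𝓝[>] 0) (𝓝 0) := by
    simpa [hk] using ((continuous_pow k).tendsto (0 : ℝ)).mono_left nhdsWithin_le_nhds
  have hsin : Tendsto (fun r ↦ r ^ m * sin (θ r)) (𝓝[>] 0) (𝓝 0) := by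
    simpa using (hpow h.multiplicity_pos.ne').mul
      (tendsto_nhdsGT_of_continuousOn_Ico h.radius_pos h.continuousOn_sin)
  have hquot : Tendsto (fun r ↦ r ^ m * meanCurv lam f θ r / ((m + 1 : ℕ) * r ^ m))
      (𝓝[>] 0) (𝓝 (meanCurv lam f θ 0 / (m + 1))) := by
    refine ((tendsto_nhdsGT_of_continuousOn_Ico h.radius_pos
      h.continuousOn_meanCurv).div_const _).congr' ?_
    filter_upwards [hIoo] with r hr
    have := hr.1.ne'
    push_cast
    field_simp
  have hlim := HasDerivAt.lhopital_zero_nhdsGT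
    (by filter_upwards [hIoo] with r hr using h.hasDerivAt_pow_mul_sin hr)
    (.of_forall fun r ↦ hasDerivAt_pow (m + 1) r)
    (by
      filter_upwards [hIoo] with r hr
      have := hr.1
      positivity) hsin (hpow m.succ_ne_zero) hquot
  refine hlim.congr' ?_
  filter_upwards [hIoo] with r hr
  rw [pow_succ, mul_div_mul_left _ _ (pow_ne_zero m hr.1.ne')]

theorem angle_zero (h : AngleProfile m lam b f θ) : θ 0 = 0 := by
  have hcont := tendsto_nhdsGT_of_continuousOn_Ico h.radius_pos h.continuousOn_sin
  have hsin : Tendsto (fun r ↦ sin (θ r)) (𝓝[>] 0) (𝓝 0) := by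
    have hid : Tendsto (fun r : ℝ ↦ r) (𝓝[>] 0) (𝓝 0) := nhdsWithin_le_nhds
    have := h.tendsto_sin_div.mul hid
    rw [mul_zero] at this
    refine this.congr' ?_
    filter_upwards [self_mem_nhdsWithin] with r (hr : 0 < r) using div_mul_cancel₀ _ hr.ne'
  have hmem := h.angle_mem 0 ⟨le_rfl, h.radius_pos⟩
  exact (sin_eq_zero_iff_of_lt_of_lt (by linarith [hmem.1, pi_pos])
    (by linarith [hmem.2, pi_pos])).1 (tendsto_nhds_unique hcont hsin)

theorem meanCurv_zero (h : AngleProfile m lam b f θ) : meanCurv lam f θ 0 = f 0 + lam := by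
  simp [meanCurv, h.angle_zero]

theorem tendsto_meridianCurv (h : AngleProfile m lam b f θ) :
    Tendsto (meridianCurv m lam f θ) (𝓝[>] 0) (𝓝 ((f 0 + lam) / (m + 1))) := by
  have hmean : Tendsto (meanCurv lam f θ) (𝓝[>] 0) (𝓝 (f 0 + lam)) := by
    rw [← h.meanCurv_zero]
    exact tendsto_nhdsGT_of_continuousOn_Ico h.radius_pos h.continuousOn_meanCurv
  have hrot := h.tendsto_sin_div.const_mul (m : ℝ)
  rw [h.meanCurv_zero] at hrot
  convert hmean.sub hrot using 2
  · simp only [meridianCurv, mul_div_assoc]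
  · field_simp
    ring

theorem meridianCurv_pos (h : AngleProfile m lam b f θ) (h0 : -lam < f 0) :
    ∀ r ∈ Ioo 0 b, 0 < meridianCurv m lam f θ r := by
  have hm : (0 : ℝ) < m := by exact_mod_cast h.multiplicity_pos
  refine pos_of_hasDerivAt_pos_of_first_zero (fun r hr ↦ h.hasDerivAt_meridianCurv hr)
    (h.tendsto_meridianCurv.eventually_const_lt (div_pos (by linarith) (by positivity)))
    fun t ht hpos hcurv ↦ ?_
  have hsin_mono : StrictMonoOn (fun r ↦ sin (θ r)) (Icc 0 t) := by
    refine strictMonoOn_of_hasDerivWithinAt_pos (convex_Icc 0 t)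
      (h.continuousOn_sin.mono (Icc_subset_Ico_right ht.2)) (f' := meridianCurv m lam f θ) ?_ ?_
    all_goals rw [interior_Icc]
    · exact fun r hr ↦ (h.hasDerivAt_sin ⟨hr.1, hr.2.trans ht.2⟩).hasDerivWithinAt
    · exact hpos
  have hsin : 0 < sin (θ t) := by
    simpa [h.angle_zero] using hsin_mono (left_mem_Icc.2 ht.1.le) (right_mem_Icc.2 ht.1.le) ht.1
  rw [hcurv, zero_mul, zero_add]
  have := ht.1
  positivity

theorem angle_strictMonoOn (h : AngleProfile m lam b f θ) (h0 : -lam < f 0) :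
    StrictMonoOn θ (Ico 0 b) := by
  refine strictMonoOn_of_hasDerivWithinAt_pos (convex_Ico 0 b) h.continuousOn_angle
    (f' := fun r ↦ meridianCurv m lam f θ r / cos (θ r)) ?_ ?_
  all_goals rw [interior_Ico]
  · exact fun r hr ↦ (h.hasDerivAt_angle r hr).hasDerivWithinAt
  · exact fun r hr ↦ div_pos (h.meridianCurv_pos h0 r hr) (h.cos_pos (Ioo_subset_Ico_self hr))

theorem angle_pos (h : AngleProfile m lam b f θ) (h0 : -lam < f 0) {r : ℝ} (hr : r ∈ Ioo 0 b) :
    0 < θ r := by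
  simpa [h.angle_zero] using
    h.angle_strictMonoOn h0 ⟨le_rfl, h.radius_pos⟩ (Ioo_subset_Ico_self hr) hr.1

theorem sin_pos (h : AngleProfile m lam b f θ) (h0 : -lam < f 0) {r : ℝ} (hr : r ∈ Ioo 0 b) :
    0 < sin (θ r) :=
  sin_pos_of_pos_of_lt_pi (h.angle_pos h0 hr)
    (by linarith [(h.angle_mem r (Ioo_subset_Ico_self hr)).2, pi_pos])

theorem tan_pos (h : AngleProfile m lam b f θ) (h0 : -lam < f 0) {r : ℝ} (hr : r ∈ Ioo 0 b) :
    0 < tan (θ r) :=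
  tan_pos_of_pos_of_lt_pi_div_two (h.angle_pos h0 hr)
    (h.angle_mem r (Ioo_subset_Ico_self hr)).2

theorem tan_monotoneOn (h : AngleProfile m lam b f θ) (h0 : -lam < f 0) :
    MonotoneOn (fun r ↦ tan (θ r)) (Ico 0 b) :=
  (strictMonoOn_tan.comp (h.angle_strictMonoOn h0) h.angle_mem).monotoneOn

theorem antitoneOn (h : AngleProfile m lam b f θ) (h0 : -lam < f 0) : AntitoneOn f (Ico 0 b) := by
  refine antitoneOn_of_hasDerivWithinAt_nonpos (convex_Ico 0 b) h.continuousOn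
    (f' := fun r ↦ -tan (θ r)) ?_ ?_
  all_goals rw [interior_Ico]
  · exact fun r hr ↦ (h.hasDerivAt r hr).hasDerivWithinAt
  · exact fun r hr ↦ neg_nonpos.2 (h.tan_pos h0 hr).le

end Positivity

section Growth

theorem meridianCurv_le (h : AngleProfile m lam b f θ) (h0 : -lam < f 0) {r : ℝ}
    (hr : r ∈ Ioo 0 b) :
    meridianCurv m lam f θ r ≤ (r + |lam|) * sin (θ r) + (f 0 + lam) := by
  have hr' := Ioo_subset_Ico_self hr
  have hsin := h.sin_pos h0 hr
  have hcos := h.cos_pos hr'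
  have hf : f r ≤ f 0 := h.antitoneOn h0 ⟨le_rfl, h.radius_pos⟩ hr' hr.1.le
  have hrot : 0 ≤ m * sin (θ r) / r := by have := hr.1; positivity
  have hheight : (f r + lam) * cos (θ r) ≤ f 0 + lam :=
    calc (f r + lam) * cos (θ r) ≤ (f 0 + lam) * cos (θ r) := by gcongr
      _ ≤ f 0 + lam := mul_le_of_le_one_right (by linarith) (cos_le_one _)
  have hlam : lam * (1 - cos (θ r)) ≤ |lam| * sin (θ r) :=
    calc lam * (1 - cos (θ r)) ≤ |lam| * (1 - cos (θ r)) := by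
          gcongr
          · linarith [cos_le_one (θ r)]
          · exact le_abs_self lam
      _ ≤ |lam| * sin (θ r) := by gcongr; exact one_sub_cos_le_sin hsin.le hcos.le
  rw [meridianCurv, meanCurv]
  linarith

theorem sin_le (h : AngleProfile m lam b f θ) (h0 : -lam < f 0) {c : ℝ} (hc : c ∈ Ico 0 b) :
    sin (θ c) ≤ (f 0 + lam) * c * exp (c ^ 2 / 2 + |lam| * c) := by
  have hdamp : ∀ r : ℝ, HasDerivAt (fun r : ℝ ↦ exp (-(r ^ 2 / 2 + |lam| * r)))
      (exp (-(r ^ 2 / 2 + |lam| * r)) * -(r + |lam|)) r := fun r ↦ by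
    refine HasDerivAt.exp (HasDerivAt.neg ?_)
    refine (((hasDerivAt_pow 2 r).div_const 2).add
      ((hasDerivAt_id r).const_mul |lam|)).congr_deriv ?_
    push_cast
    ring
  have hcomp := sub_le_sub_of_hasDerivAt_le hc.1
    (F := fun r ↦ sin (θ r) * exp (-(r ^ 2 / 2 + |lam| * r))) (G := fun r ↦ (f 0 + lam) * r)
    ((h.continuousOn_sin.mono (Icc_subset_Ico_right hc.2)).mul (by fun_prop)) (by fun_prop)
    (fun r hr ↦ (h.hasDerivAt_sin ⟨hr.1, hr.2.trans hc.2⟩).mul (hdamp r))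
    (fun r _ ↦ (hasDerivAt_id r).const_mul (f 0 + lam))
    (fun r hr ↦ by
      have hcurv := h.meridianCurv_le h0 ⟨hr.1, hr.2.trans hc.2⟩
      have hexp : exp (-(r ^ 2 / 2 + |lam| * r)) ≤ 1 := by
        have := hr.1
        rw [exp_le_one_iff, neg_nonpos]
        positivity
      calc _ = (meridianCurv m lam f θ r - (r + |lam|) * sin (θ r))
            * exp (-(r ^ 2 / 2 + |lam| * r)) := by ring
        _ ≤ (f 0 + lam) * exp (-(r ^ 2 / 2 + |lam| * r)) := by gcongr; linarith
        _ ≤ (f 0 + lam) * 1 := by gcongr; linarith)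
  simp only [h.angle_zero, sin_zero, zero_mul, mul_zero, sub_zero] at hcomp
  rwa [exp_neg, ← div_eq_mul_inv, div_le_iff₀ (exp_pos _)] at hcomp

theorem succ_mul_sin_le (h : AngleProfile m lam b f θ) {c K : ℝ} (hc : c ∈ Ioo 0 b)
    (hK : ∀ r ∈ Ioo 0 c, meanCurv lam f θ r ≤ K) : (m + 1) * sin (θ c) ≤ K * c := by
  have hcomp := sub_le_sub_of_hasDerivAt_le (F := fun r ↦ r ^ m * sin (θ r)) hc.1.le
    (((continuous_pow m).continuousOn.mul h.continuousOn_sin).mono (Icc_subset_Ico_right hc.2))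
    (by fun_prop) (fun r hr ↦ h.hasDerivAt_pow_mul_sin ⟨hr.1, hr.2.trans hc.2⟩)
    (fun r _ ↦ (hasDerivAt_pow (m + 1) r).mul_const (K / (m + 1)))
    (fun r hr ↦ by
      have := mul_le_mul_of_nonneg_left (hK r hr) (pow_nonneg hr.1.le m)
      push_cast
      field_simp
      linarith)
  have hpow : 0 < c ^ m := pow_pos hc.1 m
  simp only [zero_pow h.multiplicity_pos.ne', zero_pow m.succ_ne_zero, zero_mul, sub_zero, pow_succ,
    mul_assoc] at hcomp
  have := le_of_mul_le_mul_left hcomp hpow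
  field_simp at this
  linarith

theorem le_succ_mul_sin (h : AngleProfile m lam b f θ) {c K : ℝ} (hc : c ∈ Ioo 0 b)
    (hK : ∀ r ∈ Ioo 0 c, K ≤ meanCurv lam f θ r) : K * c ≤ (m + 1) * sin (θ c) := by
  have hcomp := sub_le_sub_of_hasDerivAt_le (G := fun r ↦ r ^ m * sin (θ r)) hc.1.le (by fun_prop)
    (((continuous_pow m).continuousOn.mul h.continuousOn_sin).mono (Icc_subset_Ico_right hc.2))
    (fun r _ ↦ (hasDerivAt_pow (m + 1) r).mul_const (K / (m + 1)))
    (fun r hr ↦ h.hasDerivAt_pow_mul_sin ⟨hr.1, hr.2.trans hc.2⟩)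
    (fun r hr ↦ by
      have := mul_le_mul_of_nonneg_left (hK r hr) (pow_nonneg hr.1.le m)
      push_cast
      field_simp
      linarith)
  have hpow : 0 < c ^ m := pow_pos hc.1 m
  simp only [zero_pow h.multiplicity_pos.ne', zero_pow m.succ_ne_zero, zero_mul, sub_zero, pow_succ,
    mul_assoc] at hcomp
  have := le_of_mul_le_mul_left hcomp hpow
  field_simp at this
  linarith

end Growth

end AngleProfile

section NearPlane

variable {m : ℕ} {lam b R : ℝ} {f θ : ℝ → ℝ}

theorem exp_neg_sq_mul_exp_le (hR : 32 ≤ R) (hlam : 8 * |lam| ≤ R) :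
    exp (-R ^ 2) * exp (R ^ 2 / 2 + |lam| * R) ≤ 1 / (2 * R ^ 3) := by
  have hexponent : -R ^ 2 + (R ^ 2 / 2 + |lam| * R) ≤ -(3 / 8 * R ^ 2) := by nlinarith
  have hcubic : 2 * R ^ 3 ≤ exp (3 / 8 * R ^ 2) := by
    refine le_trans ?_ (quadratic_le_exp_of_nonneg (by positivity))
    nlinarith [pow_pos (by linarith : 0 < R) 3]
  rw [← exp_add]
  calc _ ≤ exp (-(3 / 8 * R ^ 2)) := exp_le_exp.2 hexponent
    _ = 1 / exp (3 / 8 * R ^ 2) := by rw [exp_neg, one_div]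
    _ ≤ 1 / (2 * R ^ 3) := one_div_le_one_div_of_le (by positivity) hcubic

/-- A profile curve that starts above the hyperplane `f ≡ -λ`, at height at most `exp (-R²)` over
it, for a radius `R` that is large compared with the dimension and with `λ`. -/
structure StartsNearPlane (m : ℕ) (lam b R : ℝ) (f θ : ℝ → ℝ) : Prop
    extends AngleProfile m lam b f θ where
  neg_lam_lt : -lam < f 0
  height_le : f 0 + lam ≤ exp (-R ^ 2)
  radius_ge : 16 * ((m : ℝ) + 1) + 8 * |lam| ≤ R

namespace StartsNearPlane

theorem thirtyTwo_le_radius (h : StartsNearPlane m lam b R f θ) : 32 ≤ R := by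
  have hm : (1 : ℝ) ≤ m := by exact_mod_cast h.multiplicity_pos
  linarith [h.radius_ge, abs_nonneg lam]

theorem eight_mul_abs_le (h : StartsNearPlane m lam b R f θ) : 8 * |lam| ≤ R := by
  linarith [h.radius_ge, (m.cast_nonneg : (0 : ℝ) ≤ m)]

theorem tan_le (h : StartsNearPlane m lam b R f θ) {r : ℝ} (hr : r ∈ Ioo 0 b) (hrR : r ≤ R) :
    tan (θ r) ≤ r / R ^ 3 := by
  have hR := h.thirtyTwo_le_radius
  have hr0 := hr.1
  have hsin0 := h.sin_pos h.neg_lam_lt hr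
  have hsin : sin (θ r) ≤ r / (2 * R ^ 3) :=
    calc sin (θ r) ≤ (f 0 + lam) * r * exp (r ^ 2 / 2 + |lam| * r) :=
          h.sin_le h.neg_lam_lt (Ioo_subset_Ico_self hr)
      _ ≤ exp (-R ^ 2) * r * exp (R ^ 2 / 2 + |lam| * R) := by gcongr; exact h.height_le
      _ = r * (exp (-R ^ 2) * exp (R ^ 2 / 2 + |lam| * R)) := by ring
      _ ≤ r * (1 / (2 * R ^ 3)) := by
          gcongr
          exact exp_neg_sq_mul_exp_le hR h.eight_mul_abs_le
      _ = r / (2 * R ^ 3) := by ring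
  have hhalf : r / (2 * R ^ 3) ≤ 1 / 2 := by
    rw [div_le_div_iff₀ (by positivity) two_pos]
    nlinarith [pow_le_pow_right₀ (by linarith : 1 ≤ R) (by norm_num : 1 ≤ 3)]
  have hcos : 1 / 2 ≤ cos (θ r) := by
    linarith [one_sub_cos_le_sin hsin0.le (h.cos_pos (Ioo_subset_Ico_self hr)).le]
  calc tan (θ r) = sin (θ r) / cos (θ r) := tan_eq_sin_div_cos _
    _ ≤ r / (2 * R ^ 3) / (1 / 2) := by gcongr
    _ = r / R ^ 3 := by field_simp

theorem tan_le_inv_sq (h : StartsNearPlane m lam b R f θ) {r : ℝ} (hr : r ∈ Ioo 0 b)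
    (hrR : r ≤ R) : tan (θ r) ≤ 1 / R ^ 2 := by
  have hR := h.thirtyTwo_le_radius
  calc tan (θ r) ≤ r / R ^ 3 := h.tan_le hr hrR
    _ ≤ R / R ^ 3 := by gcongr
    _ = 1 / R ^ 2 := by field_simp

theorem radius_lt (h : StartsNearPlane m lam b R f θ)
    (hblow : Tendsto θ (𝓝[<] b) (𝓝 (π / 2))) : R < b := by
  by_contra! hbR
  have hR := h.thirtyTwo_le_radius
  obtain ⟨r, hθ, hr⟩ := ((hblow.eventually_const_lt (by linarith [pi_pos] : π / 4 < π / 2)).and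
    (Ioo_mem_nhdsLT h.radius_pos)).exists
  have htan : tan (π / 4) < tan (θ r) :=
    tan_lt_tan_of_lt_of_lt_pi_div_two (by linarith [pi_pos])
      (h.angle_mem r (Ioo_subset_Ico_self hr)).2 hθ
  have hle := h.tan_le_inv_sq hr (hr.2.le.trans hbR)
  have hone : 1 / R ^ 2 ≤ 1 := by
    rw [div_le_one (by positivity)]
    nlinarith
  rw [tan_pi_div_four] at htan
  linarith

theorem mul_tan_le (h : StartsNearPlane m lam b R f θ) {r : ℝ} (hr : r ∈ Ioo 0 b)
    (hrR : r ≤ R) : f r * tan (θ r) ≤ r := by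
  have hR := h.thirtyTwo_le_radius
  have hr0 := hr.1
  have hf : f r ≤ R :=
    calc f r ≤ f 0 := h.antitoneOn h.neg_lam_lt ⟨le_rfl, h.radius_pos⟩ (Ioo_subset_Ico_self hr)
          hr.1.le
      _ ≤ R := by
        have : exp (-R ^ 2) ≤ 1 := exp_le_one_iff.2 (by nlinarith)
        linarith [h.height_le, h.eight_mul_abs_le, neg_le_abs lam]
  calc f r * tan (θ r) ≤ R * (r / R ^ 3) :=
        mul_le_mul hf (h.tan_le hr hrR) (h.tan_pos h.neg_lam_lt hr).le (by linarith)
    _ = r / R ^ 2 := by field_simp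
    _ ≤ r := div_le_self hr0.le (by nlinarith)

theorem meanCurv_monotoneOn (h : StartsNearPlane m lam b R f θ) (hRb : R < b) :
    MonotoneOn (meanCurv lam f θ) (Icc 0 R) := by
  refine monotoneOn_of_hasDerivWithinAt_nonneg (convex_Icc 0 R)
    (f' := fun r ↦ meridianCurv m lam f θ r * (r - f r * tan (θ r)))
    (h.continuousOn_meanCurv.mono (Icc_subset_Ico_right hRb)) ?_ ?_
  all_goals rw [interior_Icc]
  · exact fun r hr ↦ (h.hasDerivAt_meanCurv ⟨hr.1, hr.2.trans hRb⟩).hasDerivWithinAt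
  · exact fun r hr ↦ mul_nonneg (h.meridianCurv_pos h.neg_lam_lt r ⟨hr.1, hr.2.trans hRb⟩).le
      (sub_nonneg.2 (h.mul_tan_le ⟨hr.1, hr.2.trans hRb⟩ hr.2.le))

/-- Since the mean curvature is nondecreasing, its weighted average `(m + 1) * sin θ / r` over
`[0, r]` is at most its value at `r`. -/
theorem sin_div_le_meridianCurv (h : StartsNearPlane m lam b R f θ) (hRb : R < b) {r : ℝ}
    (hr : r ∈ Ioc 0 R) : sin (θ r) / r ≤ meridianCurv m lam f θ r := by
  have haverage : (m + 1) * sin (θ r) ≤ meanCurv lam f θ r * r :=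
    h.succ_mul_sin_le ⟨hr.1, hr.2.trans_lt hRb⟩ fun ρ hρ ↦
      h.meanCurv_monotoneOn hRb ⟨hρ.1.le, hρ.2.le.trans hr.2⟩ (Ioc_subset_Icc_self hr) hρ.2.le
  rw [← div_le_iff₀ hr.1] at haverage
  rw [meridianCurv]
  calc sin (θ r) / r = (m + 1) * sin (θ r) / r - m * sin (θ r) / r := by ring
    _ ≤ _ := by gcongr

theorem monotoneOn_tan_div (h : StartsNearPlane m lam b R f θ) (hRb : R < b) :
    MonotoneOn (fun r ↦ tan (θ r) / r) (Ioc 0 R) := by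
  have hquot {r : ℝ} (hr : r ∈ Ioc 0 R) :=
    (h.hasDerivAt_tan ⟨hr.1, hr.2.trans_lt hRb⟩).div (hasDerivAt_id r) hr.1.ne'
  refine monotoneOn_of_hasDerivWithinAt_nonneg (convex_Ioc 0 R)
    (HasDerivAt.continuousOn fun r hr ↦ hquot hr)
    (fun r hr ↦ (hquot (interior_subset hr)).hasDerivWithinAt) fun r hr ↦ ?_
  rw [interior_Ioc] at hr
  have hr0 := hr.1
  have hr' : r ∈ Ioo 0 b := ⟨hr.1, hr.2.trans hRb⟩
  have hcos := h.cos_pos (Ioo_subset_Ico_self hr')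
  have hpos := h.meridianCurv_pos h.neg_lam_lt r hr'
  have hcurv := h.sin_div_le_meridianCurv hRb (Ioo_subset_Ioc_self hr)
  have hcube : cos (θ r) ^ 3 ≤ cos (θ r) :=
    pow_le_of_le_one hcos.le (cos_le_one _) three_ne_zero
  have hgrowth : tan (θ r) ≤ meridianCurv m lam f θ r / cos (θ r) ^ 3 * r :=
    calc tan (θ r) = sin (θ r) / r / cos (θ r) * r := by
          rw [tan_eq_sin_div_cos]
          field_simp
      _ ≤ meridianCurv m lam f θ r / cos (θ r) ^ 3 * r := by gcongr
  simp only [id, mul_one]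
  exact div_nonneg (sub_nonneg.2 hgrowth) (sq_nonneg r)

theorem two_mul_tan_half_le (h : StartsNearPlane m lam b R f θ) (hRb : R < b) :
    2 * tan (θ (R / 2)) ≤ tan (θ R) := by
  have hR : 0 < R := by linarith [h.thirtyTwo_le_radius]
  have hmono : tan (θ (R / 2)) / (R / 2) ≤ tan (θ R) / R :=
    h.monotoneOn_tan_div hRb ⟨by linarith, by linarith⟩ ⟨hR, le_rfl⟩ (by linarith)
  rw [div_le_div_iff₀ (by positivity) hR] at hmono
  nlinarith

theorem mul_le_succ_mul_sin (h : StartsNearPlane m lam b R f θ) (hRb : R < b) {r : ℝ}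
    (hr : r ∈ Ioc 0 R) : (f 0 + lam) * r ≤ (m + 1) * sin (θ r) :=
  h.le_succ_mul_sin ⟨hr.1, hr.2.trans_lt hRb⟩ fun ρ hρ ↦ by
    rw [← h.meanCurv_zero]
    exact h.meanCurv_monotoneOn hRb (left_mem_Icc.2 (hr.1.le.trans hr.2))
      ⟨hρ.1.le, hρ.2.le.trans hr.2⟩ hρ.1.le

theorem mul_tan_le_meanCurv_div_cos (h : StartsNearPlane m lam b R f θ) (hRb : R < b) {c : ℝ}
    (hc : c ∈ Ico R b) : 3 / 16 * R * tan (θ c) ≤ meanCurv lam f θ c / cos (θ c) := by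
  have hR := h.thirtyTwo_le_radius
  have hhalf : R / 2 ∈ Ioo 0 b := ⟨by linarith, by linarith⟩
  have hRc : R / 2 ≤ c := by linarith [hc.1]
  have hmem {r : ℝ} (hr : r ∈ Icc (R / 2) c) : r ∈ Ioo 0 b :=
    ⟨hhalf.1.trans_le hr.1, hr.2.trans_lt hc.2⟩
  have hcomp := sub_le_sub_of_hasDerivAt_le hRc
    (HasDerivAt.continuousOn fun r hr ↦ (h.hasDerivAt_tan (hmem hr)).const_mul (3 / 8 * R))
    (HasDerivAt.continuousOn fun r hr ↦ h.hasDerivAt_meanCurv_div_cos (hmem hr))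
    (fun r hr ↦ (h.hasDerivAt_tan (hmem (Ioo_subset_Icc_self hr))).const_mul (3 / 8 * R))
    (fun r hr ↦ h.hasDerivAt_meanCurv_div_cos (hmem (Ioo_subset_Icc_self hr)))
    (fun r hr ↦ by
      have hr' := hmem (Ioo_subset_Icc_self hr)
      have hcurv := h.meridianCurv_pos h.neg_lam_lt r hr'
      have hcos := h.cos_pos (Ioo_subset_Ico_self hr')
      have hlam : -|lam| ≤ lam * sin (θ r) := by
        refine neg_le_of_abs_le ?_
        rw [abs_mul]
        exact mul_le_of_le_one_right (abs_nonneg _) (abs_sin_le_one _)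
      rw [mul_comm]
      gcongr
      linarith [hr.1, h.eight_mul_abs_le])
  have hstart : 0 ≤ meanCurv lam f θ (R / 2) / cos (θ (R / 2)) := by
    have hmono := h.meanCurv_monotoneOn hRb (left_mem_Icc.2 (by linarith))
      ⟨hhalf.1.le, by linarith⟩ hhalf.1.le
    rw [h.meanCurv_zero] at hmono
    exact div_nonneg (by linarith [h.neg_lam_lt]) (h.cos_pos (Ioo_subset_Ico_self hhalf)).le
  have htan : 2 * tan (θ (R / 2)) ≤ tan (θ c) :=
    (h.two_mul_tan_half_le hRb).trans
      (h.tan_monotoneOn h.neg_lam_lt ⟨by linarith, hRb⟩ ⟨by linarith, hc.2⟩ hc.1)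
  nlinarith

theorem tan_le_deriv_angle (h : StartsNearPlane m lam b R f θ) (hRb : R < b) {c : ℝ}
    (hc : c ∈ Ico R b) : tan (θ c) ≤ 8 / R * (meridianCurv m lam f θ c / cos (θ c)) := by
  have hR := h.thirtyTwo_le_radius
  have hc' : c ∈ Ioo 0 b := ⟨by linarith [hc.1], hc.2⟩
  have hc0 := hc'.1
  have htan := h.tan_pos h.neg_lam_lt hc'
  have hrot : m / c ≤ R / 16 := by
    rw [div_le_iff₀ hc0]
    nlinarith [h.radius_ge, abs_nonneg lam, hc.1]
  have hcurv : R / 8 * tan (θ c) ≤ meridianCurv m lam f θ c / cos (θ c) :=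
    calc R / 8 * tan (θ c) = 3 / 16 * R * tan (θ c) - R / 16 * tan (θ c) := by ring
      _ ≤ meanCurv lam f θ c / cos (θ c) - m / c * tan (θ c) := by
          gcongr
          exact h.mul_tan_le_meanCurv_div_cos hRb hc
      _ = meridianCurv m lam f θ c / cos (θ c) := by
          rw [meridianCurv, tan_eq_sin_div_cos]; ring
  calc tan (θ c) = 8 / R * (R / 8 * tan (θ c)) := by field_simp
    _ ≤ _ := by gcongr

theorem height_at_radius_ge (h : StartsNearPlane m lam b R f θ) (hRb : R < b) :
    -lam - 1 / R ≤ f R := by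
  have hR := h.thirtyTwo_le_radius
  have hcomp := sub_le_sub_of_hasDerivAt_le (by linarith : 0 ≤ R)
    (F := fun r ↦ -(1 / R ^ 2) * r) (by fun_prop)
    (h.continuousOn.mono (Icc_subset_Ico_right hRb))
    (fun r _ ↦ (hasDerivAt_id r).const_mul (-(1 / R ^ 2)))
    (fun r hr ↦ h.hasDerivAt r ⟨hr.1, hr.2.trans hRb⟩)
    (fun r hr ↦ by linarith [h.tan_le_inv_sq ⟨hr.1, hr.2.trans hRb⟩ hr.2.le])
  have hval : -(1 / R ^ 2) * R = -(1 / R) := by field_simp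
  linarith [h.neg_lam_lt]

theorem height_at_radius_lt (h : StartsNearPlane m lam b R f θ) (hRb : R < b) : f R < -lam := by
  have hR := h.thirtyTwo_le_radius
  have hε : 0 < f 0 + lam := by linarith [h.neg_lam_lt]
  set slope := (f 0 + lam) / (m + 1) with hslope
  have hcomp := sub_le_sub_of_hasDerivAt_le (by linarith : 0 ≤ R)
    (G := fun r ↦ -(slope / 2) * r ^ 2)
    (h.continuousOn.mono (Icc_subset_Ico_right hRb)) (by fun_prop)
    (fun r hr ↦ h.hasDerivAt r ⟨hr.1, hr.2.trans hRb⟩)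
    (fun r _ ↦ (hasDerivAt_pow 2 r).const_mul (-(slope / 2)))
    (fun r hr ↦ by
      have hr' : r ∈ Ioo 0 b := ⟨hr.1, hr.2.trans hRb⟩
      have hsin : slope * r ≤ sin (θ r) := by
        rw [hslope, div_mul_eq_mul_div, div_le_iff₀ (by positivity), mul_comm (sin _)]
        exact h.mul_le_succ_mul_sin hRb ⟨hr.1, hr.2.le⟩
      have htan : sin (θ r) ≤ tan (θ r) := by
        rw [tan_eq_sin_div_cos]
        exact le_div_self (h.sin_pos h.neg_lam_lt hr').le
          (h.cos_pos (Ioo_subset_Ico_self hr')) (cos_le_one _)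
      push_cast
      linarith)
  have hdrop : f 0 + lam < slope / 2 * R ^ 2 := by
    rw [hslope, div_div, div_mul_eq_mul_div, lt_div_iff₀ (by positivity)]
    gcongr
    nlinarith [h.radius_ge, abs_nonneg lam]
  linarith

theorem height_ge (h : StartsNearPlane m lam b R f θ) {c : ℝ} (hc : c ∈ Ico R b) :
    -lam - 16 / R ≤ f c := by
  have hR := h.thirtyTwo_le_radius
  have hRb := hc.1.trans_lt hc.2
  have hsub : Icc R c ⊆ Ico 0 b := fun r hr ↦ ⟨by linarith [hr.1], hr.2.trans_lt hc.2⟩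
  have hcomp := sub_le_sub_of_hasDerivAt_le hc.1
    ((h.continuousOn_angle.mono hsub).const_mul (-(8 / R)))
    (h.continuousOn.mono hsub)
    (fun r hr ↦ (h.hasDerivAt_angle r ⟨by linarith [hr.1], hr.2.trans hc.2⟩).const_mul (-(8 / R)))
    (fun r hr ↦ h.hasDerivAt r ⟨by linarith [hr.1], hr.2.trans hc.2⟩)
    (fun r hr ↦ by linarith [h.tan_le_deriv_angle hRb ⟨hr.1.le, hr.2.trans hc.2⟩])
  have hturn : θ c - θ R ≤ 15 / 8 := by
    have hc2 := (h.angle_mem c ⟨by linarith [hc.1], hc.2⟩).2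
    have hR0 := h.angle_pos h.neg_lam_lt ⟨by linarith, hRb⟩
    linarith [pi_lt_d2]
  have hangle : 8 / R * (θ c - θ R) ≤ 15 / R :=
    calc 8 / R * (θ c - θ R) ≤ 8 / R * (15 / 8) := by gcongr
      _ = 15 / R := by ring
  have hsum : 16 / R = 15 / R + 1 / R := by ring
  linarith [h.height_at_radius_ge hRb]

theorem limit_mem_Ico (h : StartsNearPlane m lam b R f θ) (hRb : R < b) {x : ℝ}
    (hx : Tendsto f (𝓝[<] b) (𝓝 x)) : x ∈ Ico (-lam - 16 / R) (-lam) := by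
  have hR := h.thirtyTwo_le_radius
  constructor
  · refine ge_of_tendsto hx ?_
    filter_upwards [Ioo_mem_nhdsLT hRb] with c hc using h.height_ge ⟨hc.1.le, hc.2⟩
  · refine (le_of_tendsto hx ?_).trans_lt (h.height_at_radius_lt hRb)
    filter_upwards [Ioo_mem_nhdsLT hRb] with c hc using
      h.antitoneOn h.neg_lam_lt ⟨by linarith, hRb⟩ ⟨by linarith [hc.1], hc.2⟩ hc.1.le

end StartsNearPlane

end NearPlane

section ProfileEq

variable {m : ℕ} {lam b : ℝ} {f : ℝ → ℝ}

theorem ProfileEq.deriv_deriv {r : ℝ} (h : ProfileEq (m + 1) lam f r) :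
    deriv (deriv f) r =
      ((r - m / r) * deriv f r - f r - lam * √(1 + deriv f r ^ 2)) * (1 + deriv f r ^ 2) := by
  rw [ProfileEq, div_eq_iff (by positivity)] at h
  simpa using h

theorem hasDerivAt_arctan_neg_deriv {r : ℝ} (hf : DifferentiableAt ℝ (deriv f) r)
    (h : ProfileEq (m + 1) lam f r) :
    HasDerivAt (fun ρ ↦ arctan (-deriv f ρ))
      (meridianCurv m lam f (fun ρ ↦ arctan (-deriv f ρ)) r / cos (arctan (-deriv f r))) r := by
  refine hf.hasDerivAt.neg.arctan.congr_deriv ?_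
  rw [h.deriv_deriv]
  simp only [Pi.neg_apply, meridianCurv, meanCurv, cos_arctan, sin_arctan, neg_sq,
    mul_div_right_comm (m : ℝ)]
  generalize (m : ℝ) / r = k
  field_simp
  ring

/-- The angle of the profile curve `(f r, r)`. The one-sided derivative makes it continuous at the
left endpoint of `[0, b)`. -/
noncomputable def profileAngle (b : ℝ) (f : ℝ → ℝ) (r : ℝ) : ℝ :=
  arctan (-derivWithin f (Ico 0 b) r)

theorem profileAngle_eq {r : ℝ} (hr : r ∈ Ioo 0 b) :
    profileAngle b f r = arctan (-deriv f r) := by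
  rw [profileAngle, derivWithin_of_mem_nhds (Ico_mem_nhds hr.1 hr.2)]

theorem angleProfile_profileAngle (hm : 0 < m) (hb : 0 < b) (hf₁ : ContDiffOn ℝ 1 f (Ico 0 b))
    (hf₂ : ContDiffOn ℝ 2 f (Ioo 0 b)) (hode : ∀ r ∈ Ioo 0 b, ProfileEq (m + 1) lam f r) :
    AngleProfile m lam b f (profileAngle b f) where
  multiplicity_pos := hm
  radius_pos := hb
  continuousOn := hf₁.continuousOn
  continuousOn_angle := continuous_arctan.comp_continuousOn
    (hf₁.continuousOn_derivWithin (uniqueDiffOn_Ico 0 b) le_rfl).neg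
  angle_mem _ _ := arctan_mem_Ioo _
  hasDerivAt r hr := by
    rw [profileAngle_eq hr, tan_arctan, neg_neg]
    exact ((hf₂.differentiableOn two_ne_zero).differentiableAt (isOpen_Ioo.mem_nhds hr)).hasDerivAt
  hasDerivAt_angle r hr := by
    have hdiff : DifferentiableAt ℝ (deriv f) r :=
      ((hf₂.deriv_of_isOpen isOpen_Ioo (by norm_num : (1 : WithTop ℕ∞) + 1 ≤ 2)).differentiableOn
        one_ne_zero).differentiableAt (isOpen_Ioo.mem_nhds hr)
    have hangle := (hasDerivAt_arctan_neg_deriv hdiff (hode r hr)).congr_of_eventuallyEq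
      (f₁ := profileAngle b f)
      (by filter_upwards [isOpen_Ioo.mem_nhds hr] with ρ hρ using profileAngle_eq hρ)
    simpa only [meridianCurv, meanCurv, profileAngle_eq hr] using hangle

theorem tendsto_profileAngle (hb : 0 < b) (hblow : Tendsto (deriv f) (𝓝[<] b) atBot) :
    Tendsto (profileAngle b f) (𝓝[<] b) (𝓝 (π / 2)) := by
  have harctan : Tendsto arctan atTop (𝓝 (π / 2)) :=
    tendsto_arctan_atTop.mono_right nhdsWithin_le_nhds
  refine (harctan.comp (tendsto_neg_atBot_atTop.comp hblow)).congr' ?_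
  filter_upwards [Ioo_mem_nhdsLT hb] with r hr using (profileAngle_eq hr).symm

end ProfileEq

theorem le_sqrt_log_inv {R₀ ε : ℝ} (hε : 0 < ε) (hle : ε ≤ exp (-R₀ ^ 2) / √π) :
    R₀ ≤ √(log (1 / (√π * ε))) ∧ ε ≤ exp (-√(log (1 / (√π * ε))) ^ 2) := by
  have hπ : 0 < √π := sqrt_pos.2 pi_pos
  have hπε : 0 < √π * ε := by positivity
  rw [le_div_iff₀ hπ, mul_comm] at hle
  have hlog : R₀ ^ 2 ≤ log (1 / (√π * ε)) := by
    rw [one_div, log_inv]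
    linarith [(log_le_iff_le_exp hπε).2 hle]
  refine ⟨le_sqrt_of_sq_le hlog, ?_⟩
  rw [sq_sqrt ((sq_nonneg R₀).trans hlog), one_div, log_inv, neg_neg, exp_log hπε]
  exact le_mul_of_one_le_left hε.le (one_le_sqrt.2 (by linarith [pi_gt_three]))

theorem behavior_near_plane_general (n : ℕ) (hn : 2 ≤ n) (lam : ℝ) :
    ∃ εbar > (0 : ℝ), ∀ ε : ℝ, 0 < ε → ε ≤ εbar →
      ∀ (f : ℝ → ℝ) (rstar xstar : ℝ), 0 < rstar →
        ContDiffOn ℝ 1 f (Ico 0 rstar) →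
        ContDiffOn ℝ 2 f (Ioo 0 rstar) →
        (∀ r ∈ Ioo (0 : ℝ) rstar, ProfileEq n lam f r) →
        f 0 = -lam + ε →
        Tendsto (deriv f) (𝓝[<] rstar) atBot →
        Tendsto f (𝓝[<] rstar) (𝓝 xstar) →
        √(log (1 / (√π * ε))) < rstar ∧
        xstar ∈ Ico (-lam - 16 / √(log (1 / (√π * ε)))) (-lam) := by
  obtain ⟨m, rfl⟩ : ∃ m, n = m + 1 := ⟨n - 1, by lia⟩
  refine ⟨exp (-(16 * ((m : ℝ) + 1) + 8 * |lam|) ^ 2) / √π, by positivity, ?_⟩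
  intro ε hε hεbar f rstar xstar hrstar hf₁ hf₂ hode hf0 hblow hlim
  obtain ⟨hradius, hheight⟩ := le_sqrt_log_inv hε hεbar
  have hstart : StartsNearPlane m lam rstar √(log (1 / (√π * ε))) f (profileAngle rstar f) :=
    { angleProfile_profileAngle (by lia) hrstar hf₁ hf₂ hode with
      neg_lam_lt := by linarith
      height_le := by linarith
      radius_ge := hradius }
  have hlt := hstart.radius_lt (tendsto_profileAngle hrstar hblow)
  exact ⟨hlt, hstart.limit_mem_Ico hlt hlim⟩

/-- Proposition 3.1: behavior near the hyperplane solution. For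
`-min{(23n+4)/(28√n), (25n-6)/(30√n)} ≤λ < 0` there is `ε̄ > 0` such that for all
`ε ∈ (0, ε̄]`, the solution with `f(0) = -λ + ε`, `f'(0) = 0`, blowing up at `r_*`
with limit value `x_*`, satisfies `r_* ≥ √(log(1/(√π ε)))` and
`-(30n+4)/√(log(1/(√π ε))) - λ ≤ x_* < -λ`. -/
theorem behavior_near_plane
    (n : ℕ) (hn : 2 ≤ n) (lam : ℝ)
    (hlam₁ : -min ((23 * (n : ℝ) + 4) / (28 * Real.sqrt n))
        ((25 * (n : ℝ) - 6) / (30 * Real.sqrt n)) ≤ lam)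
    (hlam₂ : lam < 0) :
    ∃ εbar > (0 : ℝ), ∀ ε : ℝ, 0 < ε → ε ≤ εbar →
      ∀ (f : ℝ → ℝ) (rstar xstar : ℝ), 0 < rstar →
        ContDiffOn ℝ 1 f (Ico 0 rstar) →
        ContDiffOn ℝ 2 f (Ioo 0 rstar) →
        (∀ r ∈ Ioo (0 : ℝ) rstar, ProfileEq n lam f r) →
        f 0 = -lam + ε → deriv f 0 = 0 →
        Tendsto (deriv f) (nhdsWithin rstar (Iio rstar)) atBot →
        Tendsto f (nhdsWithin rstar (Iio rstar)) (nhds xstar) →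
        rstar ≥ Real.sqrt (Real.log (1 / (Real.sqrt Real.pi * ε))) ∧
        -(30 * (n : ℝ) + 4) / Real.sqrt (Real.log (1 / (Real.sqrt Real.pi * ε))) - lam ≤ xstar ∧
        xstar < -lam := by
  obtain ⟨εbar, hεbar, hmain⟩ := behavior_near_plane_general n hn lam
  refine ⟨εbar, hεbar, fun ε hε hle f rstar xstar hrstar hf₁ hf₂ hode hf0 _ hblow hlim ↦ ?_⟩
  obtain ⟨hradius, hlower, hupper⟩ :=
    hmain ε hε hle f rstar xstar hrstar hf₁ hf₂ hode hf0 hblow hlim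
  have hconst : 16 / √(log (1 / (√π * ε))) ≤ (30 * (n : ℝ) + 4) / √(log (1 / (√π * ε))) := by
    gcongr
    linarith [(Nat.ofNat_le_cast.2 hn : (2 : ℝ) ≤ n)]
  rw [neg_div]
  exact ⟨hradius.le, by linarith, hupper⟩
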